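/- (q-Pascal identity, second form) For every rational number α and every integer k ≥ 1, binom(α,k)_q = binom(α−1,k)_q + {α−k}_q·binom(α−1,k−1)_q in ℚ(q). -/

import Mathlib

/-!
The whole theorem rests on the translation rule `[α + 1]_q = 1 + q [α]_q`, valid for every
rational `α` (`qRat_add_one`). Iterating it gives `[α]_q = [k]_q + q^k [α - k]_q`, while
`{α - k}_q = 1 + (q - 1) [α - k]_q` and `q^k = 1 + (q - 1) [k]_q`; hence
`[α]_q = [α - k]_q + {α - k}_q [k]_q`. Multiplying by the common factor
`[α - 1]_q ⋯ [α - k + 1]_q / [k]_q!` is the identity claimed.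

For `α > 1` the translation rule holds because passing from `α` to `α + 1` increases only the
leading coefficient of the continued fraction by one, also after it has been brought to even
length. For `α ≤ 1` the rule is built into the definition of `[α]_q`, once one knows that the shift
by `2 - ⌊α⌋` used there may be replaced by any shift which moves `α` above `1`
(`qRat_eq_of_shift`).
-/

noncomputable section

open Finset

/-- The `q`-integer `[n]_q = 1 + q + ⋯ + q^{n-1}` as a rational function in `q`. -/
def qNum (n : ℕ) : RatFunc ℚ := ∑ i ∈ Finset.range n, RatFunc.X ^ i

/-- The `q⁻¹`-integer `[n]_{q⁻¹} = 1 + q⁻¹ + ⋯ + q^{-(n-1)}`. -/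
def qNumInv (n : ℕ) : RatFunc ℚ := ∑ i ∈ Finset.range n, (RatFunc.X)⁻¹ ^ i

/-- The continued fraction expansion of `p/q` computed by the Euclidean algorithm. -/
def cfNat (p q : ℕ) : List ℕ :=
  if h : q = 0 then [] else (p / q) :: cfNat q (p % q)
termination_by q
decreasing_by exact Nat.mod_lt _ (Nat.pos_of_ne_zero h)

/-- Turn a continued fraction expansion into one of even length,
replacing a final coefficient `aₙ` by `aₙ - 1, 1` if needed. -/
def evenize (l : List ℕ) : List ℕ :=
  if l.length % 2 = 0 then l else l.dropLast ++ [l.getLast! - 1, 1]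

/-- Evaluation of the Morier-Genoud--Ovsienko `q`-deformed continued fraction
`[a₁]_q + q^{a₁}/([a₂]_{q⁻¹} + q^{-a₂}/([a₃]_q + ⋯ + q^{a_{2m-1}}/[a_{2m}]_{q⁻¹}))`.
The boolean records whether the current position is odd (`true`) or even (`false`).
(The empty continued fraction is sent to `0`; since division by zero yields `0`
in `RatFunc ℚ`, a final term `[a]_{q⁻¹} + q^{-a}/0⁻ = [a]_{q⁻¹}` comes out correctly.) -/
def qCF : Bool → List ℕ → RatFunc ℚ
  | _, [] => 0
  | true, a :: l => qNum a + RatFunc.X ^ a / qCF false l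
  | false, a :: l => qNumInv a + (RatFunc.X)⁻¹ ^ a / qCF true l

/-- The Morier-Genoud--Ovsienko `q`-rational of `α > 1`, via the even-length
continued fraction expansion of `α`. -/
def qRatCF (α : ℚ) : RatFunc ℚ := qCF true (evenize (cfNat α.num.toNat α.den))

/-- The Morier-Genoud--Ovsienko `q`-rational `[α]_q ∈ ℚ(q)`, for all `α ∈ ℚ`:
for `α > 1` it is given by the `q`-deformed continued fraction, and it is
extended to all of `ℚ` by the rule `[α-1]_q = ([α]_q - 1)/q`. -/
def qRat (α : ℚ) : RatFunc ℚ :=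
  if 1 < α then qRatCF α
  else (qRatCF (α + (2 - ⌊α⌋).toNat) - qNum (2 - ⌊α⌋).toNat) / RatFunc.X ^ (2 - ⌊α⌋).toNat

/-- `{α}_q := [α+1]_q - [α]_q`, the substitute for `q^α`. -/
def qPow (α : ℚ) : RatFunc ℚ := qRat (α + 1) - qRat α

/-- The `q`-factorial `[k]_q!`. -/
def qFact (k : ℕ) : RatFunc ℚ := ∏ i ∈ Finset.range k, qNum (i + 1)

/-- The `q`-binomial coefficient `binom(α,k)_q = [α]_q [α-1]_q ⋯ [α-k+1]_q / [k]_q!`. -/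
def qBinom (α : ℚ) (k : ℕ) : RatFunc ℚ :=
  (∏ i ∈ Finset.range k, qRat (α - i)) / qFact k

/-- The Laurent-series expansion (at `q = 0`) of a rational function. -/
def lau (f : RatFunc ℚ) : LaurentSeries ℚ := ↑f

lemma qNum_succ (n : ℕ) : qNum (n + 1) = 1 + RatFunc.X * qNum n := by
  unfold qNum
  rw [Finset.sum_range_succ', Finset.mul_sum, add_comm]
  simp [pow_succ']

lemma X_pow_eq_qNum (n : ℕ) : (RatFunc.X : RatFunc ℚ) ^ n = 1 + (RatFunc.X - 1) * qNum n := by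
  induction n with
  | zero => simp [qNum]
  | succ n ih => rw [qNum_succ, pow_succ', ih]; ring

lemma qNum_succ_ne_zero (n : ℕ) : qNum (n + 1) ≠ 0 := by
  intro h
  have h1 := X_pow_eq_qNum (n + 1)
  rw [h, mul_zero, add_zero] at h1
  have h2 : (Polynomial.X : Polynomial ℚ) ^ (n + 1) = 1 := by
    apply RatFunc.algebraMap_injective ℚ
    simpa using h1
  simpa using congrArg (Polynomial.eval 0) h2

lemma qCF_true_succ_cons (a : ℕ) (l : List ℕ) :
    qCF true ((a + 1) :: l) = 1 + RatFunc.X * qCF true (a :: l) := by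
  simp only [qCF, qNum_succ, pow_succ']
  ring

/-- Bringing a continued fraction to even length commutes with increasing its leading coefficient.
The hypothesis `1 ≤ a` matters only for one-term expansions, where the coefficient `a - 1` occurs. -/
lemma qCF_evenize_succ_cons (a : ℕ) (l : List ℕ) (ha : 1 ≤ a) :
    qCF true (evenize ((a + 1) :: l)) = 1 + RatFunc.X * qCF true (evenize (a :: l)) := by
  cases l with
  | nil =>
    obtain ⟨b, rfl⟩ : ∃ b, a = b + 1 := ⟨a - 1, by omega⟩
    simpa [evenize] using qCF_true_succ_cons b [1]
  | cons b l =>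
    unfold evenize
    by_cases h : (b :: l).length % 2 = 1
    · rw [if_pos (by simp at h ⊢; omega), if_pos (by simp at h ⊢; omega), qCF_true_succ_cons]
    · rw [if_neg (by simp at h ⊢; omega), if_neg (by simp at h ⊢; omega)]
      simpa [List.getLast!_cons_eq_getLastD] using qCF_true_succ_cons a _

lemma qRatCF_add_one (α : ℚ) (hα : 1 < α) : qRatCF (α + 1) = 1 + RatFunc.X * qRatCF α := by
  have hd : (α + 1).den = α.den := by
    simp
  have hn : (α + 1).num = α.num + α.den := by
    have h := Rat.mul_den_eq_num (α + 1)
    rw [hd, add_mul, Rat.mul_den_eq_num, one_mul] at h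
    exact_mod_cast h.symm
  have hlt : (α.den : ℤ) < α.num := by
    have := Rat.lt_iff 1 α
    simp at this
    exact this.1 hα
  have hpos := α.den_pos
  have hnat : (α.num + α.den).toNat = α.num.toNat + α.den := by omega
  unfold qRatCF
  rw [hd, hn, hnat, cfNat, dif_neg hpos.ne', cfNat.eq_def α.num.toNat, dif_neg hpos.ne',
    Nat.add_div_right _ hpos, Nat.add_mod_right]
  refine qCF_evenize_succ_cons _ _ ?_
  rw [Nat.le_div_iff_mul_le hpos]
  omega

lemma qRatCF_add_nat (α : ℚ) (hα : 1 < α) (n : ℕ) :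
    qRatCF (α + n) = qNum n + RatFunc.X ^ n * qRatCF α := by
  induction n with
  | zero => simp [qNum]
  | succ n ih =>
    have h : 1 < α + n := by
      have : (0 : ℚ) ≤ n := n.cast_nonneg
      linarith
    rw [Nat.cast_succ, ← add_assoc, qRatCF_add_one _ h, ih, qNum_succ, pow_succ']
    ring

lemma qNum_add (m n : ℕ) : qNum (m + n) = qNum m + RatFunc.X ^ m * qNum n := by
  induction m with
  | zero => simp [qNum]
  | succ m ih => rw [Nat.succ_add, qNum_succ, ih, qNum_succ, pow_succ']; ring

lemma shift_eq_shift_add (α : ℚ) (N M : ℕ) (h : 1 < α + N) :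
    (qRatCF (α + N) - qNum N) / RatFunc.X ^ N =
      (qRatCF (α + (N + M : ℕ)) - qNum (N + M)) / RatFunc.X ^ (N + M) := by
  have hX : (RatFunc.X : RatFunc ℚ) ≠ 0 := RatFunc.X_ne_zero
  rw [Nat.cast_add, ← add_assoc, qRatCF_add_nat _ h, add_comm N M, qNum_add, pow_add]
  field_simp
  ring

/-- Any shift moving `α` above `1` computes `[α]_q`, not only the shift by `2 - ⌊α⌋` chosen in the
definition (for `α ≤ 1`) or the trivial one (for `α > 1`). -/
lemma qRat_eq_of_shift (α : ℚ) (N : ℕ) (h : 1 < α + N) :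
    qRat α = (qRatCF (α + N) - qNum N) / RatFunc.X ^ N := by
  unfold qRat
  split_ifs with hα
  · simpa [qNum] using shift_eq_shift_add α 0 N (by simpa using hα)
  · have hfl : ⌊α⌋ ≤ 1 := by
      have : (⌊α⌋ : ℚ) ≤ 1 := (Int.floor_le α).trans (not_lt.1 hα)
      exact_mod_cast this
    have hcast : (((2 - ⌊α⌋).toNat : ℕ) : ℚ) = 2 - ⌊α⌋ := by
      have : (((2 - ⌊α⌋).toNat : ℕ) : ℤ) = 2 - ⌊α⌋ := Int.toNat_of_nonneg (by omega)
      exact_mod_cast congrArg (Int.cast : ℤ → ℚ) this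
    have h1 : 1 < α + ((2 - ⌊α⌋).toNat : ℕ) := by
      rw [hcast]
      linarith [Int.floor_le α]
    rw [shift_eq_shift_add α _ N h1, shift_eq_shift_add α N (2 - ⌊α⌋).toNat h,
      add_comm N]

/-- The translation rule, for every rational `α`: compute `[α + 1]_q` with a shift by `N` and
`[α]_q` with the shift by `N + 1`, so that both involve the same continued fraction. -/
lemma qRat_add_one (α : ℚ) : qRat (α + 1) = 1 + RatFunc.X * qRat α := by
  have hX : (RatFunc.X : RatFunc ℚ) ≠ 0 := RatFunc.X_ne_zero
  obtain ⟨N, hN⟩ := exists_nat_gt (1 - α)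
  rw [qRat_eq_of_shift (α + 1) N (by linarith),
    qRat_eq_of_shift α (N + 1) (by push_cast; linarith),
    show α + 1 + (N : ℚ) = α + (N + 1 : ℕ) by push_cast; ring, add_comm N 1, qNum_add,
    show qNum 1 = 1 by simp [qNum], pow_add]
  have hsplit : qNum (1 + N) = qNum (N + 1) := by rw [add_comm]
  have hp : qNum N + RatFunc.X ^ N = 1 + RatFunc.X * qNum N := by
    rw [X_pow_eq_qNum]; ring
  field_simp
  linear_combination -hp

lemma qRat_eq_add_pow_mul (α : ℚ) (k : ℕ) :
    qRat α = qNum k + RatFunc.X ^ k * qRat (α - k) := by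
  induction k with
  | zero => simp [qNum]
  | succ k ih =>
    have h := qRat_add_one (α - (k + 1 : ℕ))
    rw [show α - ((k + 1 : ℕ) : ℚ) + 1 = α - k by push_cast; ring] at h
    rw [ih, h, qNum_add, pow_succ, show qNum 1 = 1 by simp [qNum]]
    ring

lemma qRat_eq_add_qPow_mul (α : ℚ) (k : ℕ) :
    qRat α = qRat (α - k) + qPow (α - k) * qNum k := by
  rw [qPow, qRat_add_one, qRat_eq_add_pow_mul α k, X_pow_eq_qNum]
  ring

/-- The `q`-Pascal identity, second form:
`binom(α,k)_q = binom(α-1,k)_q + {α-k}_q·binom(α-1,k-1)_q`. -/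
theorem qBinom_pascal_two (α : ℚ) (k : ℕ) (hk : 1 ≤ k) :
    qBinom α k = qBinom (α - 1) k + qPow (α - k) * qBinom (α - 1) (k - 1) := by
  obtain ⟨m, rfl⟩ : ∃ m, k = m + 1 := ⟨k - 1, by omega⟩
  have hfac : qFact (m + 1) = qFact m * qNum (m + 1) := Finset.prod_range_succ _ _
  have hm : qFact m ≠ 0 := Finset.prod_ne_zero_iff.2 fun i _ => qNum_succ_ne_zero i
  have hk0 := qNum_succ_ne_zero m
  have hfirst : ∏ i ∈ Finset.range (m + 1), qRat (α - i) =
      (∏ i ∈ Finset.range m, qRat (α - 1 - i)) * qRat α := by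
    rw [Finset.prod_range_succ']
    congr 1
    · refine Finset.prod_congr rfl fun i _ => congrArg qRat ?_
      push_cast
      ring
    · simp
  have hlast : ∏ i ∈ Finset.range (m + 1), qRat (α - 1 - i) =
      (∏ i ∈ Finset.range m, qRat (α - 1 - i)) * qRat (α - (m + 1 : ℕ)) := by
    rw [Finset.prod_range_succ]
    congr 2
    push_cast
    ring
  unfold qBinom
  rw [hfirst, hlast, hfac, Nat.add_sub_cancel, qRat_eq_add_qPow_mul α (m + 1)]
  field_simp

end
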